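/- arXiv:1701.08791 — 2 statements merged into one kernel-verified Lean document; each statement's English description precedes it below -/
import Mathlib

section
/- Let F be a probability measure on [0,∞) with ∫₀^∞ x dF(x) ≤ 𝖲, and set β_F := −ln( ∫₀^∞ e^{−x} dF(x) ). Then for every x ≥ 0, the marginal entropy h(x;F) := −∫₀^∞ K(x,y) · ln f(y;F) dy satisfies 0 ≤ h(x;F) ≤ (x + 𝖨 + 1) + 𝖨 + β_F. -/
open MeasureTheory Real Filter Topology

/-! The kernel `K I x` is the density of `‖W‖²` for `W = √x + √I·U + Z`, with `U` uniform on the unit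
circle and `Z` a standard complex Gaussian (density `e^{-‖z‖²}/π`). Pointwise estimates give
`e^{-(y+x+I)} ≤ K I x y ≤ 1`, hence `e^{-(y+I)} ∫ e^{-x'} dF ≤ f(y;F) ≤ 1`, so that
`0 ≤ -log f(y;F) ≤ y + c` with `c = I - log ∫ e^{-x'} dF ≥ 0`. Nonnegativity of the marginal entropy
follows at once; for the upper bound it remains to see that `∫ K I x y (y + c) dy = x + I + 1 + c`
(`lintegral_K`).

In the variable `y = ρ²` polar coordinates read `∫₀^∞ ∫_{-π}^{π} φ(√y e^{iθ}) dθ dy = 2 ∫_ℂ φ`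
(`lintegral_angle`). This turns the moment of `K` into a planar integral of a radial function
translated by `√x`; translating back, and discarding the odd part of `‖w + √x‖²`
(`lintegral_shift`), leaves a radial integral. Since the Rician factor is itself an angular average
of a Gaussian centred at `√I` (`angle_gauss`), the same two moves reduce it to `∫ e^{-y}(y + d) dy`.
-/

noncomputable def besselI0 (r : ℝ) : ℝ :=
  (1 / (2 * π)) * ∫ t in (0:ℝ)..(2 * π), Real.exp (r * Real.cos t)

noncomputable def K (I x y : ℝ) : ℝ :=
  (1 / (2 * π)) * ∫ θ in (-π)..π,
    Real.exp (-(y + x + I - 2 * Real.sqrt (y * x) * Real.cos θ)) *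
      besselI0 (2 * Real.sqrt (I * (y + x - 2 * Real.sqrt (y * x) * Real.cos θ)))

noncomputable def outDen (I : ℝ) (F : Measure ℝ) (y : ℝ) : ℝ :=
  ∫ x, K I x y ∂F

noncomputable def outEnt (I : ℝ) (F : Measure ℝ) : ℝ :=
  -∫ y in Set.Ioi (0:ℝ), outDen I F y * Real.log (outDen I F y)

noncomputable def margEnt (I : ℝ) (F : Measure ℝ) (x : ℝ) : ℝ :=
  -∫ y in Set.Ioi (0:ℝ), K I x y * Real.log (outDen I F y)

/-! ### Pointwise bounds -/

lemma continuous_besselI0 : Continuous besselI0 := by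
  unfold besselI0
  refine continuous_const.mul ?_
  exact intervalIntegral.continuous_parametric_intervalIntegral_of_continuous' (by fun_prop) _ _

/-- The Rician radial density: `rice I r` is `π` times the planar density of `√I·U + Z` at squared
radius `r`, with `U` uniform on the unit circle and `Z` standard complex Gaussian. -/
noncomputable def rice (I r : ℝ) : ℝ := Real.exp (-(r + I)) * besselI0 (2 * Real.sqrt (I * r))

lemma continuous_rice (I : ℝ) : Continuous (rice I) := by
  unfold rice
  have := continuous_besselI0
  fun_prop

lemma K_eq (I x y : ℝ) : K I x y = (1 / (2 * π)) * ∫ θ in (-π)..π,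
    rice I (y + x - 2 * Real.sqrt (y * x) * Real.cos θ) := by
  unfold K rice
  congr 1
  refine intervalIntegral.integral_congr fun θ _ => ?_
  congr 2
  ring

lemma continuous_K (I : ℝ) : Continuous fun p : ℝ × ℝ => K I p.1 p.2 := by
  simp only [K_eq]
  refine continuous_const.mul ?_
  have := continuous_rice I
  exact intervalIntegral.continuous_parametric_intervalIntegral_of_continuous'
    (f := fun (p : ℝ × ℝ) θ => rice I (p.2 + p.1 - 2 * Real.sqrt (p.2 * p.1) * Real.cos θ))
    (by fun_prop) _ _

lemma one_le_besselI0 (r : ℝ) : 1 ≤ besselI0 r := by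
  unfold besselI0
  have h : ∫ t in (0:ℝ)..(2 * π), (r * Real.cos t + 1) ≤
      ∫ t in (0:ℝ)..(2 * π), Real.exp (r * Real.cos t) := by
    refine intervalIntegral.integral_mono_on (by positivity) ?_ ?_ fun t _ => Real.add_one_le_exp _
    · exact Continuous.intervalIntegrable (by fun_prop) _ _
    · exact Continuous.intervalIntegrable (by fun_prop) _ _
  rw [intervalIntegral.integral_add (Continuous.intervalIntegrable (by fun_prop) _ _)
    (Continuous.intervalIntegrable (by fun_prop) _ _)] at h
  simp at h
  rw [one_div, inv_mul_eq_div, le_div_iff₀ (by positivity)]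
  linarith

lemma besselI0_le (r : ℝ) (hr : 0 ≤ r) : besselI0 r ≤ Real.exp r := by
  unfold besselI0
  have h : ∫ t in (0:ℝ)..(2 * π), Real.exp (r * Real.cos t) ≤
      ∫ t in (0:ℝ)..(2 * π), Real.exp r := by
    refine intervalIntegral.integral_mono_on (by positivity) ?_ ?_ fun t _ => ?_
    · exact Continuous.intervalIntegrable (by fun_prop) _ _
    · exact Continuous.intervalIntegrable (by fun_prop) _ _
    · exact Real.exp_le_exp.2 (mul_le_of_le_one_right hr (Real.cos_le_one t))
  simp at h
  rw [one_div, inv_mul_eq_div, div_le_iff₀ (by positivity)]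
  linarith

lemma rice_nonneg (I r : ℝ) : 0 ≤ rice I r :=
  mul_nonneg (Real.exp_nonneg _) (zero_le_one.trans (one_le_besselI0 _))

lemma exp_le_rice (I r : ℝ) : Real.exp (-(r + I)) ≤ rice I r :=
  le_mul_of_one_le_right (Real.exp_nonneg _) (one_le_besselI0 _)

/-- From `I₀(z) ≤ e^z`, the exponent is at most `-(√r - √I)²`. -/
lemma rice_le_one {I r : ℝ} (hI : 0 ≤ I) (hr : 0 ≤ r) : rice I r ≤ 1 := by
  unfold rice
  refine (mul_le_mul_of_nonneg_left (besselI0_le _ (by positivity)) (Real.exp_nonneg _)).trans ?_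
  rw [← Real.exp_add, Real.exp_le_one_iff, Real.sqrt_mul hI]
  nlinarith [sq_nonneg (Real.sqrt I - Real.sqrt r), Real.sq_sqrt hI, Real.sq_sqrt hr]

lemma radius_nonneg {x y : ℝ} (hx : 0 ≤ x) (hy : 0 ≤ y) (θ : ℝ) :
    0 ≤ y + x - 2 * Real.sqrt (y * x) * Real.cos θ := by
  have h1 : Real.sqrt (y * x) * Real.cos θ ≤ Real.sqrt (y * x) :=
    mul_le_of_le_one_right (Real.sqrt_nonneg _) (Real.cos_le_one θ)
  rw [Real.sqrt_mul hy] at *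
  nlinarith [sq_nonneg (Real.sqrt y - Real.sqrt x), Real.sq_sqrt hx, Real.sq_sqrt hy]

lemma K_nonneg (I x y : ℝ) : 0 ≤ K I x y := by
  rw [K_eq]
  refine mul_nonneg (by positivity) (intervalIntegral.integral_nonneg (by linarith [pi_pos]) ?_)
  exact fun θ _ => rice_nonneg _ _

lemma K_le_one {I x y : ℝ} (hI : 0 ≤ I) (hx : 0 ≤ x) (hy : 0 ≤ y) : K I x y ≤ 1 := by
  rw [K_eq]
  have hc := continuous_rice I
  have h : ∫ θ in (-π)..π, rice I (y + x - 2 * Real.sqrt (y * x) * Real.cos θ) ≤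
      ∫ θ in (-π)..π, (1:ℝ) := by
    refine intervalIntegral.integral_mono_on (by linarith [pi_pos]) ?_ ?_ fun t _ =>
      rice_le_one hI (radius_nonneg hx hy t)
    · exact Continuous.intervalIntegrable (by fun_prop) _ _
    · exact Continuous.intervalIntegrable (by fun_prop) _ _
  simp at h
  rw [one_div, inv_mul_eq_div, div_le_iff₀ (by positivity)]
  linarith

lemma exp_le_K (I x y : ℝ) : Real.exp (-(y + x + I)) ≤ K I x y := by
  rw [K_eq]
  have hc := continuous_rice I
  have h : ∫ θ in (-π)..π, (Real.exp (-(y + x + I)) * (2 * Real.sqrt (y * x)) * Real.cos θ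
      + Real.exp (-(y + x + I))) ≤
      ∫ θ in (-π)..π, rice I (y + x - 2 * Real.sqrt (y * x) * Real.cos θ) := by
    refine intervalIntegral.integral_mono_on (by linarith [pi_pos]) ?_ ?_ fun t _ => ?_
    · exact Continuous.intervalIntegrable (by fun_prop) _ _
    · exact Continuous.intervalIntegrable (by fun_prop) _ _
    · refine le_trans ?_ (exp_le_rice _ _)
      have e : -(y + x - 2 * Real.sqrt (y * x) * Real.cos t + I) =
        -(y + x + I) + 2 * Real.sqrt (y * x) * Real.cos t := by ring
      rw [e, Real.exp_add]
      nlinarith [Real.add_one_le_exp (2 * Real.sqrt (y * x) * Real.cos t),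
        Real.exp_pos (-(y + x + I))]
  rw [intervalIntegral.integral_add (Continuous.intervalIntegrable (by fun_prop) _ _)
    (Continuous.intervalIntegrable (by fun_prop) _ _), intervalIntegral.integral_const_mul] at h
  simp only [integral_cos, Real.sin_neg, Real.sin_pi, intervalIntegral.integral_const,
    smul_eq_mul, neg_zero, sub_zero, mul_zero, zero_add] at h
  rw [one_div, inv_mul_eq_div, le_div_iff₀ (by positivity)]
  linarith

/-! ### Polar coordinates in the squared radius -/

/-- The point `√y · e^{iθ}` of the plane. -/
noncomputable def pt (y θ : ℝ) : ℂ := Complex.polarCoord.symm (Real.sqrt y, θ)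

lemma pt_eq (y θ : ℝ) : pt y θ = (Real.sqrt y : ℂ) * (Real.cos θ + Real.sin θ * Complex.I) := by
  simp [pt]

lemma normSq_pt_sub {y a : ℝ} (hy : 0 ≤ y) (ha : 0 ≤ a) (θ : ℝ) :
    Complex.normSq (pt y θ - Real.sqrt a) = y + a - 2 * Real.sqrt (y * a) * Real.cos θ := by
  rw [pt_eq, Complex.normSq_apply, Real.sqrt_mul hy]
  simp only [Complex.sub_re, Complex.sub_im, Complex.mul_re, Complex.mul_im, Complex.add_re,
    Complex.add_im, Complex.ofReal_re, Complex.ofReal_im, Complex.I_re, Complex.I_im]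
  have h1 := Real.sq_sqrt hy
  have h2 := Real.sq_sqrt ha
  have h3 := Real.sin_sq_add_cos_sq θ
  linear_combination h1 + h2 + (√y)^2 * h3

lemma normSq_pt {y : ℝ} (hy : 0 ≤ y) (θ : ℝ) : Complex.normSq (pt y θ) = y := by
  have := normSq_pt_sub hy le_rfl θ
  simpa using this

lemma lintegral_sq (g : ℝ → ENNReal) : ∫⁻ y in Set.Ioi (0:ℝ), g y =
    ∫⁻ r in Set.Ioi (0:ℝ), ENNReal.ofReal (2 * r) * g (r ^ 2) := by
  have h := lintegral_image_eq_lintegral_abs_deriv_mul (s := Set.Ioi (0:ℝ)) (f := fun r => r ^ 2)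
    (f' := fun r => 2 * r) measurableSet_Ioi
    (fun r _ => by simpa using (hasDerivAt_pow 2 r).hasDerivWithinAt)
    (fun a ha b hb hab => (pow_left_inj₀ (le_of_lt ha) (le_of_lt hb) two_ne_zero).1 hab) g
  have himg : (fun r : ℝ => r ^ 2) '' Set.Ioi 0 = Set.Ioi 0 := by
    ext y
    constructor
    · rintro ⟨r, hr, rfl⟩
      exact pow_pos (Set.mem_Ioi.1 hr) 2
    · intro hy
      exact ⟨Real.sqrt y, Real.sqrt_pos.2 hy, Real.sq_sqrt (le_of_lt hy)⟩
  rw [himg] at h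
  rw [h]
  refine setLIntegral_congr_fun measurableSet_Ioi fun r hr => ?_
  have : 0 < r := hr
  rw [abs_of_pos (by positivity)]

lemma lintegral_angle {φ : ℂ → ℝ} (hc : Continuous φ) (h0 : ∀ w, 0 ≤ φ w) :
    ∫⁻ y in Set.Ioi (0:ℝ), ENNReal.ofReal (∫ θ in (-π)..π, φ (pt y θ)) =
      2 * ∫⁻ w, ENNReal.ofReal (φ w) := by
  have hps : Continuous fun p : ℝ × ℝ => φ (Complex.polarCoord.symm p) := by
    simp only [Complex.polarCoord_symm_apply]
    fun_prop
  have hpt (r : ℝ) : Continuous fun θ => φ (Complex.polarCoord.symm (r, θ)) :=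
    hps.comp (by fun_prop : Continuous fun θ : ℝ => (r, θ))
  rw [lintegral_sq, ← Complex.lintegral_comp_polarCoord_symm, polarCoord_target,
    Measure.volume_eq_prod, ← Measure.prod_restrict, lintegral_prod, ← lintegral_const_mul']
  rotate_left
  · simp
  · refine Measurable.aemeasurable ?_
    simp only [smul_eq_mul]
    exact (measurable_fst.ennreal_ofReal).mul hps.measurable.ennreal_ofReal
  refine setLIntegral_congr_fun measurableSet_Ioi fun r hr => ?_
  have hr' : (0:ℝ) ≤ r := le_of_lt hr
  simp only [smul_eq_mul, pt, Real.sqrt_sq hr']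
  rw [lintegral_const_mul' _ _ (by simp), ENNReal.ofReal_mul (by norm_num), mul_assoc,
    intervalIntegral.integral_of_le (by linarith [pi_pos]), integral_Ioc_eq_integral_Ioo,
    ofReal_integral_eq_lintegral_ofReal]
  · simp
  · exact ((hpt r).integrableOn_Icc).mono_set Set.Ioo_subset_Icc_self
  · exact ae_of_all _ fun θ => h0 _

lemma lintegral_radial {ψ : ℝ → ℝ} (hc : Continuous ψ) (h0 : ∀ r, 0 ≤ r → 0 ≤ ψ r) :
    2 * ∫⁻ w, ENNReal.ofReal (ψ (Complex.normSq w)) =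
      ∫⁻ y in Set.Ioi (0:ℝ), ENNReal.ofReal (2 * π * ψ y) := by
  rw [← lintegral_angle (φ := fun w => ψ (Complex.normSq w))
    (hc.comp Complex.continuous_normSq) fun w => h0 _ (Complex.normSq_nonneg _)]
  refine setLIntegral_congr_fun measurableSet_Ioi fun y hy => ?_
  simp only [normSq_pt (le_of_lt hy), intervalIntegral.integral_const, smul_eq_mul]
  congr 2
  ring

/-- Translating by `√a` shifts the second moment of a radial weight by `a`: after substitution, the
cross term of `‖w + √a‖²` is odd in `w` and cancels against its reflection. -/
lemma lintegral_shift {ψ : ℝ → ℝ} (hc : Continuous ψ) (h0 : ∀ r, 0 ≤ ψ r) {a c : ℝ}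
    (ha : 0 ≤ a) (hcc : 0 ≤ c) :
    ∫⁻ w, ENNReal.ofReal (ψ (Complex.normSq (w - Real.sqrt a)) * (Complex.normSq w + c)) =
      ∫⁻ w, ENNReal.ofReal (ψ (Complex.normSq w) * (Complex.normSq w + (a + c))) := by
  have hn := Complex.continuous_normSq
  have hA : ∫⁻ w, ENNReal.ofReal (ψ (Complex.normSq (w - Real.sqrt a)) * (Complex.normSq w + c)) =
      ∫⁻ w, ENNReal.ofReal
        (ψ (Complex.normSq w) * (Complex.normSq (w + Real.sqrt a) + c)) := by
    rw [← lintegral_add_right_eq_self _ ((Real.sqrt a : ℝ) : ℂ)]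
    simp
  have hB : ∫⁻ w, ENNReal.ofReal (ψ (Complex.normSq w) * (Complex.normSq (w + Real.sqrt a) + c)) =
      ∫⁻ w, ENNReal.ofReal
        (ψ (Complex.normSq w) * (Complex.normSq (-w + Real.sqrt a) + c)) := by
    rw [← lintegral_neg_eq_self]
    simp
  have h2 : 2 * ∫⁻ w, ENNReal.ofReal
        (ψ (Complex.normSq w) * (Complex.normSq (w + Real.sqrt a) + c)) =
      2 * ∫⁻ w, ENNReal.ofReal (ψ (Complex.normSq w) * (Complex.normSq w + (a + c))) := by
    rw [two_mul]
    nth_rewrite 2 [hB]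
    rw [← lintegral_add_left (by fun_prop), ← lintegral_const_mul _ (by fun_prop)]
    refine lintegral_congr fun w => ?_
    have n1 := Complex.normSq_nonneg (w + Real.sqrt a)
    have n2 := Complex.normSq_nonneg (-w + Real.sqrt a)
    have n3 := h0 (Complex.normSq w)
    rw [← ENNReal.ofReal_add (by positivity) (by positivity),
      show (2 : ENNReal) = ENNReal.ofReal 2 by simp, ← ENNReal.ofReal_mul (by norm_num)]
    congr 1
    simp only [Complex.normSq_apply, Complex.add_re, Complex.add_im, Complex.neg_re,
      Complex.neg_im, Complex.ofReal_re, Complex.ofReal_im]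
    linear_combination 2 * ψ (w.re * w.re + w.im * w.im) * Real.sq_sqrt ha
  rw [hA]
  exact (ENNReal.mul_right_inj (by norm_num) (by norm_num)).1 h2

/-! ### The first moment of the kernel -/

lemma angle_gauss {I y : ℝ} (hI : 0 ≤ I) (hy : 0 ≤ y) :
    ∫ θ in (-π)..π, Real.exp (-Complex.normSq (pt y θ - Real.sqrt I)) = 2 * π * rice I y := by
  have hper : Function.Periodic
      (fun t => Real.exp (2 * Real.sqrt (I * y) * Real.cos t)) (2 * π) := by
    intro t
    simp
  have h := hper.intervalIntegral_add_eq (-π) 0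
  rw [show -π + 2 * π = π by ring, zero_add] at h
  unfold rice besselI0
  rw [← h]
  have e : ∀ θ, Real.exp (-Complex.normSq (pt y θ - Real.sqrt I)) =
      Real.exp (-(y + I)) * Real.exp (2 * Real.sqrt (I * y) * Real.cos θ) := by
    intro θ
    rw [normSq_pt_sub hy hI, ← Real.exp_add, mul_comm y I]
    congr 1
    ring
  simp only [e]
  rw [intervalIntegral.integral_const_mul]
  field_simp

lemma angle_rice {x y : ℝ} (I : ℝ) (hx : 0 ≤ x) (hy : 0 ≤ y) :
    ∫ θ in (-π)..π, rice I (Complex.normSq (pt y θ - Real.sqrt x)) = 2 * π * K I x y := by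
  rw [K_eq]
  simp only [normSq_pt_sub hy hx]
  field_simp

lemma lintegral_gamma {d : ℝ} (hd : 0 ≤ d) :
    ∫⁻ y in Set.Ioi (0:ℝ), ENNReal.ofReal (2 * π * (Real.exp (-y) * (y + d))) =
      ENNReal.ofReal (2 * π * (1 + d)) := by
  have i0 : IntegrableOn (fun y : ℝ => Real.exp (-y)) (Set.Ioi 0) := integrableOn_exp_neg_Ioi 0
  have i1 : IntegrableOn (fun y : ℝ => Real.exp (-y) * y) (Set.Ioi 0) := by
    have := Real.GammaIntegral_convergent (s := 2) (by norm_num)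
    refine this.congr_fun (fun y _ => ?_) measurableSet_Ioi
    norm_num
  have v1 : ∫ y in Set.Ioi (0:ℝ), Real.exp (-y) * y = 1 := by
    have := Real.Gamma_eq_integral (s := 2) (by norm_num)
    rw [Real.Gamma_two] at this
    rw [this]
    refine setIntegral_congr_fun measurableSet_Ioi fun y _ => ?_
    norm_num
  rw [← ofReal_integral_eq_lintegral_ofReal]
  · rw [integral_const_mul]
    simp only [mul_add]
    rw [integral_add i1 (i0.mul_const d), v1, integral_mul_const, integral_exp_neg_Ioi_zero]
    congr 1
    ring
  · simp only [mul_add]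
    exact (i1.const_mul _).add ((i0.mul_const d).const_mul _)
  · filter_upwards [ae_restrict_mem measurableSet_Ioi] with y hy
    have : (0:ℝ) < y := hy
    simp only [Pi.zero_apply]
    positivity

lemma lintegral_K {I x c : ℝ} (hI : 0 ≤ I) (hx : 0 ≤ x) (hc : 0 ≤ c) :
    ∫⁻ y in Set.Ioi (0:ℝ), ENNReal.ofReal (2 * π * (K I x y * (y + c))) =
      ENNReal.ofReal (2 * π * (x + I + 1 + c)) := by
  have hr := continuous_rice I
  have hn := Complex.continuous_normSq
  have n0 := Complex.normSq_nonneg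
  have s1 : ∫⁻ y in Set.Ioi (0:ℝ), ENNReal.ofReal (2 * π * (K I x y * (y + c))) =
      2 * ∫⁻ w, ENNReal.ofReal
        (rice I (Complex.normSq (w - Real.sqrt x)) * (Complex.normSq w + c)) := by
    rw [← lintegral_angle (φ := fun w =>
      rice I (Complex.normSq (w - Real.sqrt x)) * (Complex.normSq w + c)) (by fun_prop)
      fun w => mul_nonneg (rice_nonneg _ _) (add_nonneg (n0 _) hc)]
    refine setLIntegral_congr_fun measurableSet_Ioi fun y hy => ?_
    have hy' : 0 ≤ y := le_of_lt hy
    simp only [normSq_pt hy']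
    rw [intervalIntegral.integral_mul_const, angle_rice I hx hy', mul_assoc (2 * π)]
  have s2 : ∫⁻ y in Set.Ioi (0:ℝ), ENNReal.ofReal (2 * π * (rice I y * (y + (x + c)))) =
      2 * ∫⁻ w, ENNReal.ofReal
        (Real.exp (-Complex.normSq (w - Real.sqrt I)) * (Complex.normSq w + (x + c))) := by
    rw [← lintegral_angle (φ := fun w =>
      Real.exp (-Complex.normSq (w - Real.sqrt I)) * (Complex.normSq w + (x + c))) (by fun_prop)
      fun w => mul_nonneg (Real.exp_nonneg _) (add_nonneg (n0 _) (by positivity))]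
    refine setLIntegral_congr_fun measurableSet_Ioi fun y hy => ?_
    have hy' : 0 ≤ y := le_of_lt hy
    simp only [normSq_pt hy']
    rw [intervalIntegral.integral_mul_const, angle_gauss hI hy', mul_assoc (2 * π)]
  rw [s1, lintegral_shift hr (rice_nonneg I) hx hc,
    lintegral_radial (ψ := fun r => rice I r * (r + (x + c))) (by fun_prop)
      fun r h => mul_nonneg (rice_nonneg _ _) (by positivity),
    s2, lintegral_shift (ψ := fun r => Real.exp (-r)) (by fun_prop)
      (fun r => Real.exp_nonneg _) hI (by positivity),
    lintegral_radial (ψ := fun r => Real.exp (-r) * (r + (I + (x + c)))) (by fun_prop)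
      fun r h => by positivity,
    lintegral_gamma (by positivity)]
  congr 1
  ring

lemma integral_K {I x c : ℝ} (hI : 0 ≤ I) (hx : 0 ≤ x) (hc : 0 ≤ c) :
    IntegrableOn (fun y => K I x y * (y + c)) (Set.Ioi 0) ∧
      ∫ y in Set.Ioi (0:ℝ), K I x y * (y + c) = x + I + 1 + c := by
  have hK : Continuous fun y => K I x y :=
    (continuous_K I).comp (by fun_prop : Continuous fun y : ℝ => (x, y))
  have h := lintegral_K hI hx hc
  have hm : AEStronglyMeasurable (fun y => 2 * π * (K I x y * (y + c)))
      (volume.restrict (Set.Ioi 0)) :=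
    Continuous.aestronglyMeasurable (by fun_prop)
  have h0 : 0 ≤ᵐ[volume.restrict (Set.Ioi 0)] fun y => 2 * π * (K I x y * (y + c)) := by
    filter_upwards [ae_restrict_mem measurableSet_Ioi] with y hy
    have : (0:ℝ) < y := hy
    have := K_nonneg I x y
    simp only [Pi.zero_apply]
    positivity
  have hi : IntegrableOn (fun y => 2 * π * (K I x y * (y + c))) (Set.Ioi 0) := by
    refine ⟨hm, ?_⟩
    rw [hasFiniteIntegral_iff_ofReal h0, h]
    exact ENNReal.ofReal_lt_top
  have hpi : (2 * π) ≠ 0 := by positivity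
  constructor
  · refine (hi.const_mul (2 * π)⁻¹).congr (ae_of_all _ fun y => ?_)
    dsimp only
    field_simp
  · have hv := integral_eq_lintegral_of_nonneg_ae h0 hm
    rw [h, ENNReal.toReal_ofReal (by positivity), integral_const_mul] at hv
    exact mul_left_cancel₀ hpi hv

theorem stmt_6 (S I : ℝ) (hS : 0 ≤ S) (hI : 0 ≤ I) (F : Measure ℝ) [IsProbabilityMeasure F]
    (hsupp : F (Set.Iio 0) = 0) (hmean : (∫ x, x ∂F) ≤ S) (x : ℝ) (hx : 0 ≤ x) :
    0 ≤ margEnt I F x ∧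
      margEnt I F x ≤ (x + I + 1) + I + (-Real.log (∫ x', Real.exp (-x') ∂F)) := by
  have hF : ∀ᵐ t ∂F, 0 ≤ t := by
    rw [ae_iff]
    simp only [not_le]
    exact hsupp
  have hie : Integrable (fun t => Real.exp (-t)) F := by
    refine Integrable.of_bound (C := 1) (by fun_prop) ?_
    filter_upwards [hF] with t ht
    rw [Real.norm_eq_abs, abs_of_pos (Real.exp_pos _)]
    simpa using ht
  have hpos : 0 < ∫ t, Real.exp (-t) ∂F := integral_exp_pos hie
  have hle : ∫ t, Real.exp (-t) ∂F ≤ 1 := by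
    have := integral_mono_ae hie (integrable_const (1:ℝ))
      (by filter_upwards [hF] with t ht; simpa using ht)
    simpa using this
  have hβ : Real.log (∫ t, Real.exp (-t) ∂F) ≤ 0 := Real.log_nonpos hpos.le hle
  have hiK (y : ℝ) (hy : 0 ≤ y) : Integrable (fun t => K I t y) F := by
    refine Integrable.of_bound (C := 1) ?_ ?_
    · exact ((continuous_K I).comp
        (by fun_prop : Continuous fun t : ℝ => (t, y))).aestronglyMeasurable
    · filter_upwards [hF] with t ht
      rw [Real.norm_eq_abs, abs_of_nonneg (K_nonneg _ _ _)]
      exact K_le_one hI ht hy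
  have hup (y : ℝ) (hy : 0 ≤ y) : outDen I F y ≤ 1 := by
    have := integral_mono_ae (hiK y hy) (integrable_const (1:ℝ))
      (by filter_upwards [hF] with t ht using K_le_one hI ht hy)
    simpa [outDen] using this
  have hlow (y : ℝ) (hy : 0 ≤ y) :
      Real.exp (-(y + I)) * ∫ t, Real.exp (-t) ∂F ≤ outDen I F y := by
    rw [← integral_const_mul]
    refine integral_mono (hie.const_mul _) (hiK y hy) fun t => ?_
    refine le_trans (le_of_eq ?_) (exp_le_K I t y)
    rw [← Real.exp_add]
    congr 1
    ring
  have hlog0 (y : ℝ) (hy : 0 ≤ y) : 0 ≤ -Real.log (outDen I F y) :=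
    neg_nonneg.2 (Real.log_nonpos (integral_nonneg fun t => K_nonneg _ _ _) (hup y hy))
  have hlog1 (y : ℝ) (hy : 0 ≤ y) : -Real.log (outDen I F y) ≤
      y + (I + -Real.log (∫ t, Real.exp (-t) ∂F)) := by
    have := Real.log_le_log (by positivity) (hlow y hy)
    rw [Real.log_mul (Real.exp_pos _).ne' hpos.ne', Real.log_exp] at this
    linarith
  have hm : margEnt I F x = ∫ y in Set.Ioi (0:ℝ), K I x y * -Real.log (outDen I F y) := by
    unfold margEnt
    rw [← integral_neg]
    simp only [mul_neg]
  obtain ⟨hi, hv⟩ := integral_K hI hx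
    (c := I + -Real.log (∫ t, Real.exp (-t) ∂F)) (by linarith)
  rw [hm]
  constructor
  · exact setIntegral_nonneg measurableSet_Ioi fun y hy =>
      mul_nonneg (K_nonneg _ _ _) (hlog0 y (le_of_lt hy))
  -- `integral_mono_of_nonneg` does not require integrability of the left-hand integrand.
  · have := integral_mono_of_nonneg (μ := volume.restrict (Set.Ioi (0:ℝ)))
      (f := fun y => K I x y * -Real.log (outDen I F y)) (by
        filter_upwards [ae_restrict_mem measurableSet_Ioi] with y hy
        exact mul_nonneg (K_nonneg _ _ _) (hlog0 y (le_of_lt hy))) hi (by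
        filter_upwards [ae_restrict_mem measurableSet_Ioi] with y hy
        exact mul_le_mul_of_nonneg_left (hlog1 y (le_of_lt hy)) (K_nonneg _ _ _))
    linarith
end

section
/- Invertibility of the kernel transform: let g : [0,∞) → ℝ be continuous and Lebesgue integrable. If ∫₀^∞ K(x,y) · g(x) dx = 0 for every y ≥ 0, then g(x) = 0 for every x ≥ 0. By the symmetry K(x,y) = K(y,x) of the kernel, the transform g ↦ (x ↦ ∫₀^∞ K(x,y) g(y) dy) is injective on the same class of functions as well. -/
/-!
Identify `x, y ≥ 0` with squared moduli of complex numbers `z, w`. Then `exp (-(s + I)) * I₀(2 √(I s))`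
at `s = ‖u‖ ^ 2` is the average over `φ` of `exp (-‖u - √I exp (i φ)‖ ^ 2)`, a Gaussian smeared over the
circle of radius `√I` (`exp_mul_besselI0`), and `K I (‖z‖ ^ 2) (‖w‖ ^ 2)` is the average of this
function `P` (up to normalisation) over `w - ‖z‖ exp (i θ)` (`K_eq`). In polar coordinates the
transform of `g` is therefore, up to a constant, the convolution on `ℂ` of the radial function
`G z = g (‖z‖ ^ 2)` with `P` (`integral_radial_mul_ringGauss`).

If the transform vanishes, then `𝓕 G * 𝓕 P = 0`. Here `𝓕 P` is a nowhere vanishing Gaussian times the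
Fourier transform of a circle, which along each line through the origin extends to an entire
function equal to `2 * π` at `0`; hence `𝓕 P` is nonzero on a dense set
(`frequently_fourier_ringGauss_ne_zero`). Since `𝓕 G` is continuous it vanishes identically, and
Fourier inversion gives `G = 0` (`radial_eq_zero`). This planar Fourier transform of radial functions
is the Hankel transform of order zero. Injectivity with the roles of the two arguments exchanged
follows from the symmetry of `K`.
-/

open MeasureTheory Real Filter Topology

open scoped FourierTransform

/-! ### The kernel as a circular average -/

/-- The point `a * exp (i φ)` of the complex plane. The radius `a` may be any real number, and the
expression is the one used by `Complex.polarCoord.symm`. -/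
noncomputable def circ (a φ : ℝ) : ℂ := a * (Real.cos φ + Real.sin φ * Complex.I)

lemma continuous_circ : Continuous fun p : ℝ × ℝ => circ p.1 p.2 := by
  unfold circ; fun_prop

lemma circ_periodic (a : ℝ) : Function.Periodic (circ a) (2 * π) := by
  intro φ; simp [circ]

lemma norm_circ (a φ : ℝ) : ‖circ a φ‖ = |a| := by
  have := Complex.norm_polarCoord_symm (a, φ)
  rwa [Complex.polarCoord_symm_apply] at this

/-- Law of cosines, with the angle measured from the direction of `w`. -/
lemma norm_sub_circ_sq (w : ℂ) (r θ : ℝ) :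
    ‖w - circ r (θ + w.arg)‖ ^ 2 = ‖w‖ ^ 2 + r ^ 2 - 2 * ‖w‖ * r * Real.cos θ := by
  have h1 := Complex.norm_mul_cos_arg w
  have h2 := Complex.norm_mul_sin_arg w
  have h3 := Complex.sq_norm w
  have e : (w - circ r (θ + w.arg)).re = ‖w‖ * Real.cos w.arg - r * Real.cos (θ + w.arg) := by
    rw [h1]; simp [circ, -Complex.ofReal_cos, -Complex.ofReal_sin]
  have e' : (w - circ r (θ + w.arg)).im = ‖w‖ * Real.sin w.arg - r * Real.sin (θ + w.arg) := by
    rw [h2]; simp [circ, -Complex.ofReal_cos, -Complex.ofReal_sin]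
  rw [Complex.sq_norm, Complex.normSq_apply, e, e', Real.cos_add, Real.sin_add]
  have h4 := Real.sin_sq_add_cos_sq w.arg
  have h5 := Real.sin_sq_add_cos_sq θ
  generalize ‖w‖ = n at *
  generalize Real.sin w.arg = s at *
  generalize Real.cos w.arg = c at *
  generalize Real.sin θ = S at *
  generalize Real.cos θ = C at *
  linear_combination (n ^ 2 + r^2 - 2 * n * r * C) * h4 + r^2 * (s^2+c^2)*h5

/-- The Gaussian `exp (-‖·‖ ^ 2)` on `ℂ` convolved with arc-angle measure (total mass `2 * π`) on the
circle of radius `a`. -/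
noncomputable def ringGauss (a : ℝ) (u : ℂ) : ℝ :=
  ∫ φ in (0:ℝ)..(2 * π), Real.exp (-‖u - circ a φ‖ ^ 2)

/-- The Bessel factor of the channel kernel is a Gaussian smeared over a circle: expand
`‖u - √I * exp (i φ)‖ ^ 2` by the law of cosines and rotate `φ` by the argument of `u`. -/
lemma exp_mul_besselI0 {I : ℝ} (hI : 0 ≤ I) (u : ℂ) :
    Real.exp (-(‖u‖ ^ 2 + I)) * besselI0 (2 * √(I * ‖u‖ ^ 2)) =
      (1 / (2 * π)) * ringGauss (√I) u := by
  have hper : Function.Periodic (fun φ => Real.exp (-‖u - circ (√I) φ‖ ^ 2)) (2 * π) := by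
    intro φ; simp only [circ_periodic _ φ]
  have h := hper.intervalIntegral_add_eq (u.arg) 0
  rw [zero_add] at h
  rw [ringGauss, ← h, besselI0, mul_left_comm, ← intervalIntegral.integral_const_mul]
  congr 1
  have h' := intervalIntegral.integral_comp_add_right (a := 0) (b := 2 * π)
    (fun φ => Real.exp (-‖u - circ (√I) φ‖ ^ 2)) u.arg
  rw [zero_add, add_comm (2 * π)] at h'
  rw [← h']
  refine intervalIntegral.integral_congr fun φ _ => ?_
  rw [norm_sub_circ_sq, ← Real.exp_add, Real.sq_sqrt hI, Real.sqrt_mul hI,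
    Real.sqrt_sq (norm_nonneg _)]
  ring_nf

/-- The kernel is the circular average of `ringGauss`. The centre `w` need not be a nonnegative real:
the integrand depends on `θ` only through its difference with the argument of `w`. -/
lemma K_eq_s14 {I : ℝ} (hI : 0 ≤ I) (w : ℂ) {r : ℝ} (hr : 0 ≤ r) :
    K I (r ^ 2) (‖w‖ ^ 2) =
      (1 / (2 * π)) ^ 2 * ∫ θ in (-π)..π, ringGauss (√I) (w - circ r θ) := by
  have hper : Function.Periodic (fun θ => ringGauss (√I) (w - circ r θ)) (2 * π) := by
    intro φ; simp only [circ_periodic _ φ]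
  have h := hper.intervalIntegral_add_eq (-π + w.arg) (-π)
  have h' := intervalIntegral.integral_comp_add_right (a := -π) (b := π)
    (fun θ => ringGauss (√I) (w - circ r θ)) w.arg
  rw [show -π + w.arg + 2 * π = π + w.arg by ring, show -π + 2 * π = π by ring] at h
  rw [← h, ← h', K, pow_two (1 / (2 * π)), mul_assoc]
  congr 1
  rw [← intervalIntegral.integral_const_mul]
  refine intervalIntegral.integral_congr fun θ _ => ?_
  rw [← exp_mul_besselI0 hI, norm_sub_circ_sq, Real.sqrt_mul (by positivity),
    Real.sqrt_sq (norm_nonneg _), Real.sqrt_sq hr]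
  ring_nf

/-! ### Polar coordinates and radial functions -/

lemma integrable_iff_polar {F : ℂ → ℝ} (hF : Continuous F) :
    Integrable F ↔
      IntegrableOn (fun p : ℝ × ℝ => p.1 * F (circ p.1 p.2)) (Set.Ioi 0 ×ˢ Set.Ioo (-π) π) := by
  have hm : MeasurableSet (Set.Ioi (0:ℝ) ×ˢ Set.Ioo (-π) π) :=
    measurableSet_Ioi.prod measurableSet_Ioo
  have hc : Continuous fun p : ℝ × ℝ => p.1 * F (circ p.1 p.2) :=
    continuous_fst.mul (hF.comp continuous_circ)
  have key := Complex.lintegral_comp_polarCoord_symm (fun z => ‖F z‖ₑ)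
  have : ∫⁻ p in Set.Ioi (0:ℝ) ×ˢ Set.Ioo (-π) π, ‖p.1 * F (circ p.1 p.2)‖ₑ = ∫⁻ z, ‖F z‖ₑ := by
    rw [← key]
    refine setLIntegral_congr_fun hm fun p hp => ?_
    have h0 : (0:ℝ) < p.1 := hp.1
    simp only [enorm_mul, Complex.polarCoord_symm_apply, smul_eq_mul]
    rw [Real.enorm_of_nonneg h0.le, circ]
  unfold IntegrableOn Integrable
  rw [hasFiniteIntegral_iff_enorm, hasFiniteIntegral_iff_enorm, this]
  simp [hF.aestronglyMeasurable, hc.aestronglyMeasurable]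

lemma integral_polar {F : ℂ → ℝ} (hF : Continuous F) (hi : Integrable F) :
    ∫ z, F z = ∫ r in Set.Ioi (0:ℝ), r * ∫ θ in (-π)..π, F (circ r θ) := by
  have h := (integrable_iff_polar hF).1 hi
  rw [← Complex.integral_comp_polarCoord_symm]
  have : ∫ p in polarCoord.target, p.1 • F (Complex.polarCoord.symm p) =
      ∫ p in Set.Ioi (0:ℝ) ×ˢ Set.Ioo (-π) π, p.1 * F (circ p.1 p.2) := by
    simp only [Complex.polarCoord_symm_apply]; rfl
  rw [this, Measure.volume_eq_prod, setIntegral_prod _ h]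
  refine setIntegral_congr_fun measurableSet_Ioi fun r _ => ?_
  simp only
  rw [intervalIntegral.integral_of_le (by linarith [pi_pos]), integral_Ioc_eq_integral_Ioo,
    integral_const_mul]

/-- Continuity on `[0, ∞)` suffices, since only the values `g (‖z‖ ^ 2)` enter. -/
lemma continuous_radial {g : ℝ → ℝ} (hg : ContinuousOn g (Set.Ici 0)) :
    Continuous fun z : ℂ => g (‖z‖ ^ 2) :=
  hg.comp_continuous (by fun_prop) fun z => by simp

lemma integrable_radial {g : ℝ → ℝ} (hg : ContinuousOn g (Set.Ici 0))
    (hi : IntegrableOn g (Set.Ici 0)) : Integrable fun z : ℂ => g (‖z‖ ^ 2) := by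
  rw [integrable_iff_polar (continuous_radial hg), IntegrableOn, Measure.volume_eq_prod,
    ← Measure.prod_restrict]
  simp only [norm_circ, sq_abs]
  have h1 : IntegrableOn (fun r : ℝ => r * g (r ^ 2)) (Set.Ioi 0) := by
    have := (integrableOn_Ioi_comp_rpow_iff' g (p := 2) (by norm_num)).2
      (hi.mono_set Set.Ioi_subset_Ici_self)
    convert this using 3 with r
    norm_num
  exact h1.comp_fst _

lemma integral_sq (h : ℝ → ℝ) :
    ∫ r in Set.Ioi (0:ℝ), r * h (r ^ 2) = (1 / 2) * ∫ x in Set.Ioi (0:ℝ), h x := by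
  rw [← integral_comp_rpow_Ioi_of_pos (g := h) (p := 2) (by norm_num), ← integral_const_mul]
  congr 1 with r
  norm_num
  ring

/-! ### The smeared Gaussian and its convolution with radial functions -/

lemma continuous_gauss_sub_circ (a : ℝ) :
    Continuous fun p : ℂ × ℝ => Real.exp (-‖p.1 - circ a p.2‖ ^ 2) := by
  have : Continuous fun p : ℂ × ℝ => circ a p.2 := by unfold circ; fun_prop
  fun_prop

lemma continuous_ringGauss (a : ℝ) : Continuous (ringGauss a) :=
  intervalIntegral.continuous_parametric_intervalIntegral_of_continuous'
    (f := fun (u : ℂ) (φ : ℝ) => Real.exp (-‖u - circ a φ‖ ^ 2))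
    (continuous_gauss_sub_circ a) 0 (2 * π)

lemma norm_ringGauss_le (a : ℝ) (u : ℂ) : ‖ringGauss a u‖ ≤ 2 * π := by
  have := intervalIntegral.norm_integral_le_of_norm_le_const (a := 0) (b := 2 * π) (C := 1)
    (f := fun φ => Real.exp (-‖u - circ a φ‖ ^ 2)) (fun φ _ => by
      rw [Real.norm_of_nonneg (Real.exp_pos _).le]
      exact Real.exp_le_one_iff.2 (by simp))
  simpa [ringGauss, abs_of_pos pi_pos] using this

/-- The kernel transform of `g` is, up to a constant, the planar convolution of the radial function
`g (‖·‖ ^ 2)` with `ringGauss`. -/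
lemma integral_radial_mul_ringGauss {I : ℝ} (hI : 0 ≤ I) {g : ℝ → ℝ}
    (hg : ContinuousOn g (Set.Ici 0)) (hi : IntegrableOn g (Set.Ici 0)) (w : ℂ) :
    Integrable (fun z : ℂ => g (‖z‖ ^ 2) * ringGauss (√I) (w - z)) ∧
    ∫ z : ℂ, g (‖z‖ ^ 2) * ringGauss (√I) (w - z) =
      2 * π ^ 2 * ∫ x in Set.Ioi (0:ℝ), K I x (‖w‖ ^ 2) * g x := by
  have hcr : Continuous fun z : ℂ => ringGauss (√I) (w - z) :=
    (continuous_ringGauss _).comp (by fun_prop)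
  have hc : Continuous fun z : ℂ => g (‖z‖ ^ 2) * ringGauss (√I) (w - z) :=
    (continuous_radial hg).mul hcr
  have hint : Integrable (fun z : ℂ => g (‖z‖ ^ 2) * ringGauss (√I) (w - z)) :=
    (integrable_radial hg hi).mul_bdd hcr.aestronglyMeasurable
      (Eventually.of_forall fun z => norm_ringGauss_le _ _)
  refine ⟨hint, ?_⟩
  rw [integral_polar hc hint]
  have e := integral_sq fun x => K I x (‖w‖ ^ 2) * g x
  have : ∫ x in Set.Ioi (0:ℝ), K I x (‖w‖ ^ 2) * g x =
      2 * ∫ r in Set.Ioi (0:ℝ), r * (K I (r ^ 2) (‖w‖ ^ 2) * g (r ^ 2)) := by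
    rw [e]; ring
  rw [this, ← mul_assoc, ← integral_const_mul]
  refine setIntegral_congr_fun measurableSet_Ioi fun r hr => ?_
  simp only [norm_circ, sq_abs]
  rw [K_eq_s14 hI w (le_of_lt hr), intervalIntegral.integral_const_mul]
  field_simp

/-! ### The Fourier transform of the smeared Gaussian -/

lemma integrable_gauss : Integrable fun u : ℂ => Real.exp (-‖u‖ ^ 2) := by
  have := (GaussianFourier.integrable_cexp_neg_mul_sq_norm_add (b := 1) (by simp) 0 (0 : ℂ)).norm
  refine this.congr (Eventually.of_forall fun u => ?_)
  simp [Complex.norm_exp, ← Complex.ofReal_pow]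

lemma integrable_gauss_sub_circ (a : ℝ) :
    Integrable (fun p : ℂ × ℝ => Real.exp (-‖p.1 - circ a p.2‖ ^ 2))
      (volume.prod (volume.restrict (Set.Ioc 0 (2 * π)))) := by
  rw [integrable_prod_iff' (continuous_gauss_sub_circ a).aestronglyMeasurable]
  refine ⟨Eventually.of_forall fun φ => integrable_gauss.comp_sub_right (circ a φ), ?_⟩
  have (φ : ℝ) : ∫ u : ℂ, ‖Real.exp (-‖u - circ a φ‖ ^ 2)‖ = ∫ u : ℂ, ‖Real.exp (-‖u‖ ^ 2)‖ :=
    integral_sub_right_eq_self (fun u : ℂ => ‖Real.exp (-‖u‖ ^ 2)‖) _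
  simp only [this]
  exact integrable_const _

lemma ringGauss_eq (a : ℝ) (u : ℂ) :
    ringGauss a u = ∫ φ in Set.Ioc 0 (2 * π), Real.exp (-‖u - circ a φ‖ ^ 2) := by
  rw [ringGauss, intervalIntegral.integral_of_le (by positivity)]

lemma integrable_ringGauss (a : ℝ) : Integrable fun u : ℂ => (ringGauss a u : ℂ) := by
  simp only [ringGauss_eq]
  exact (integrable_gauss_sub_circ a).integral_prod_left.ofReal

/-- The phase `-2 π ⟪a * exp (i φ), ξ⟫` that the point at angle `φ` of the circle of radius `a`
contributes to the Fourier transform at frequency `ξ`. -/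
noncomputable def ringPhase (a : ℝ) (ξ : ℂ) (φ : ℝ) : ℝ := -(2 * π) * inner ℝ (circ a φ) ξ

lemma continuous_ringPhase (a : ℝ) (ξ : ℂ) : Continuous (ringPhase a ξ) := by
  have : Continuous fun φ : ℝ => circ a φ := by unfold circ; fun_prop
  unfold ringPhase
  fun_prop

/-- The Fourier transform of the smeared Gaussian is that of the Gaussian times that of the circle
(a Bessel function `J₀`); the latter is written as a complex moment generating function so that its
analyticity in the scale of `ξ` is available. -/
lemma fourier_ringGauss (a : ℝ) (ξ : ℂ) :
    𝓕 (fun u : ℂ => (ringGauss a u : ℂ)) ξ =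
      ProbabilityTheory.complexMGF (ringPhase a ξ) (volume.restrict (Set.Ioc 0 (2 * π))) Complex.I *
        𝓕 (fun u : ℂ => ((Real.exp (-‖u‖ ^ 2) : ℝ) : ℂ)) ξ := by
  rw [ProbabilityTheory.complexMGF, ← integral_mul_const]
  have hswap : Integrable (Function.uncurry fun (u : ℂ) (φ : ℝ) =>
      Complex.exp (↑(-2 * π * inner ℝ u ξ) * Complex.I) *
        ((Real.exp (-‖u - circ a φ‖ ^ 2) : ℝ) : ℂ))
      (volume.prod (volume.restrict (Set.Ioc 0 (2 * π)))) := by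
    refine (integrable_gauss_sub_circ a).ofReal.bdd_mul (c := 1) ?_ ?_
    · exact Continuous.aestronglyMeasurable (by fun_prop)
    · exact Eventually.of_forall fun p => by rw [Complex.norm_exp_ofReal_mul_I]
  calc 𝓕 (fun u : ℂ => (ringGauss a u : ℂ)) ξ
      = ∫ u : ℂ, ∫ φ in Set.Ioc 0 (2 * π), Complex.exp (↑(-2 * π * inner ℝ u ξ) * Complex.I) *
        ((Real.exp (-‖u - circ a φ‖ ^ 2) : ℝ) : ℂ) := by
        rw [Real.fourier_eq']
        simp only [ringGauss_eq, smul_eq_mul, integral_const_mul, integral_complex_ofReal]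
    _ = ∫ φ in Set.Ioc 0 (2 * π), ∫ u : ℂ, Complex.exp (↑(-2 * π * inner ℝ u ξ) * Complex.I) *
        ((Real.exp (-‖u - circ a φ‖ ^ 2) : ℝ) : ℂ) := integral_integral_swap hswap
    _ = _ := by
        refine integral_congr_ae (Eventually.of_forall fun φ => ?_)
        beta_reduce
        rw [← integral_add_right_eq_self _ (circ a φ), Real.fourier_eq', ← integral_const_mul]
        refine integral_congr_ae (Eventually.of_forall fun u => ?_)
        simp only [add_sub_cancel_right, smul_eq_mul, ← mul_assoc, ← Complex.exp_add, ringPhase,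
          inner_add_left]
        congr 2
        push_cast
        ring

lemma fourier_gauss_ne_zero (ξ : ℂ) :
    𝓕 (fun u : ℂ => ((Real.exp (-‖u‖ ^ 2) : ℝ) : ℂ)) ξ ≠ 0 := by
  have h := fourier_gaussian_innerProductSpace (b := 1) (by simp) ξ
  have e : (fun u : ℂ => ((Real.exp (-‖u‖ ^ 2) : ℝ) : ℂ)) =
      fun u : ℂ => Complex.exp (-1 * ‖u‖ ^ 2) := by
    ext u; push_cast; simp
  rw [e, h]
  simp [Complex.exp_ne_zero, pi_ne_zero]

/-- The Fourier transform of `ringGauss` does not vanish on any neighbourhood of `ξ` in the line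
`ℝ ξ`: otherwise the identity theorem would make the entire function `Φ` vanish at `0`, where its
value is the length `2 * π` of the circle of angles. -/
lemma frequently_fourier_ringGauss_ne_zero (a : ℝ) (ξ : ℂ) :
    ∃ᶠ t : ℝ in 𝓝 1, 𝓕 (fun u : ℂ => (ringGauss a u : ℂ)) (t • ξ) ≠ 0 := by
  set ν : Measure ℝ := volume.restrict (Set.Ioc 0 (2 * π)) with hν
  set Φ : ℂ → ℂ := ProbabilityTheory.complexMGF (ringPhase a ξ) ν with hΦ
  have hset : ProbabilityTheory.integrableExpSet (ringPhase a ξ) ν = Set.univ := by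
    refine Set.eq_univ_of_forall fun t => ?_
    have : Continuous fun φ => Real.exp (t * ringPhase a ξ φ) := by
      have := continuous_ringPhase a ξ
      fun_prop
    exact this.integrableOn_Ioc
  have han : AnalyticOnNhd ℂ Φ Set.univ := by
    have := ProbabilityTheory.analyticOnNhd_complexMGF (X := ringPhase a ξ) (μ := ν)
    simpa [hset] using this
  have hscale (t : ℝ) : ProbabilityTheory.complexMGF (ringPhase a (t • ξ)) ν Complex.I =
      Φ (t * Complex.I) := by
    simp only [hΦ, ProbabilityTheory.complexMGF, ringPhase, inner_smul_right]
    congr 1 with φ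
    congr 1
    push_cast
    ring
  intro hzero
  have hz : ∀ᶠ t : ℝ in 𝓝 1, Φ (t * Complex.I) = 0 := by
    filter_upwards [hzero] with t ht
    rw [not_not, fourier_ringGauss, hscale] at ht
    exact (mul_eq_zero.1 ht).resolve_right (fourier_gauss_ne_zero _)
  have hfreq : ∃ᶠ z in 𝓝[≠] (Complex.I), Φ z = 0 := by
    have ht : Tendsto (fun t : ℝ => (t : ℂ) * Complex.I) (𝓝[≠] 1) (𝓝[≠] Complex.I) := by
      refine tendsto_nhdsWithin_iff.2 ⟨?_, ?_⟩
      · have : Continuous fun t : ℝ => (t : ℂ) * Complex.I := by fun_prop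
        simpa using this.continuousAt.tendsto.mono_left (nhdsWithin_le_nhds (a := (1:ℝ)))
      · filter_upwards [self_mem_nhdsWithin] with t ht h
        apply ht
        simpa using h
    exact ht.frequently (hz.filter_mono nhdsWithin_le_nhds).frequently
  have h0 := han.eqOn_zero_of_preconnected_of_frequently_eq_zero isPreconnected_univ
    (Set.mem_univ _) hfreq (Set.mem_univ 0)
  simp only [hΦ, ProbabilityTheory.complexMGF, hν] at h0
  simp [pi_pos.le] at h0

/-! ### Injectivity -/

/-- A continuous integrable radial function whose convolution with `ringGauss` vanishes is zero: its
Fourier transform is continuous and vanishes on a dense set, so Fourier inversion applies. -/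
lemma radial_eq_zero {I : ℝ} {g : ℝ → ℝ}
    (hg : ContinuousOn g (Set.Ici 0)) (hi : IntegrableOn g (Set.Ici 0))
    (h : ∀ w : ℂ, ∫ z : ℂ, g (‖z‖ ^ 2) * ringGauss (√I) (w - z) = 0) {x : ℝ} (hx : 0 ≤ x) :
    g x = 0 := by
  set G : ℂ → ℂ := fun z => (g (‖z‖ ^ 2) : ℂ) with hG
  set P : ℂ → ℂ := fun u => (ringGauss (√I) u : ℂ) with hP
  have hGc : Continuous G := Complex.continuous_ofReal.comp (continuous_radial hg)
  have hGi : Integrable G := (integrable_radial hg hi).ofReal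
  have hPi : Integrable P := integrable_ringGauss _
  have hconv : convolution G P (ContinuousLinearMap.mul ℂ ℂ) volume = 0 := by
    ext w
    simp only [convolution, ContinuousLinearMap.mul_apply', hG, hP, Pi.zero_apply]
    simp only [← Complex.ofReal_mul]
    rw [integral_complex_ofReal, h w, Complex.ofReal_zero]
  have hmul (ξ : ℂ) : 𝓕 G ξ * 𝓕 P ξ = 0 := by
    rw [← Real.fourier_mul_convolution_eq hGi hPi, hconv]
    simp [Real.fourier_eq']
  have hFc : Continuous (𝓕 G) :=
    VectorFourier.fourierIntegral_continuous Real.continuous_fourierChar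
      (by exact continuous_inner) hGi
  have hF : 𝓕 G = 0 := by
    ext ξ
    by_contra hne
    have hne' : ∀ᶠ t : ℝ in 𝓝 1, 𝓕 G (t • ξ) ≠ 0 := by
      have hc : Continuous fun t : ℝ => 𝓕 G (t • ξ) := by fun_prop
      refine hc.continuousAt.eventually_ne ?_
      simpa using hne
    obtain ⟨t, ht, ht'⟩ := ((frequently_fourier_ringGauss_ne_zero (√I) ξ).and_eventually hne').exists
    exact (mul_ne_zero ht' ht) (hmul _)
  have hinv := hGc.fourierInv_fourier_eq hGi (by rw [hF]; exact integrable_zero _ _ _)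
  have := congrFun hinv (√x : ℂ)
  rw [hF] at this
  simp only [Real.fourierInv_eq', hG, Pi.zero_apply, smul_zero, integral_zero, Complex.norm_real,
    Real.norm_eq_abs, sq_abs, Real.sq_sqrt hx] at this
  exact_mod_cast this.symm

lemma transform_injective {I : ℝ} (hI : 0 ≤ I) {g₁ g₂ : ℝ → ℝ}
    (hg₁ : ContinuousOn g₁ (Set.Ici 0)) (hi₁ : IntegrableOn g₁ (Set.Ici 0))
    (hg₂ : ContinuousOn g₂ (Set.Ici 0)) (hi₂ : IntegrableOn g₂ (Set.Ici 0))
    (h : ∀ y : ℝ, 0 ≤ y →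
      (∫ x in Set.Ioi (0:ℝ), K I x y * g₁ x) = ∫ x in Set.Ioi (0:ℝ), K I x y * g₂ x)
    {x : ℝ} (hx : 0 ≤ x) : g₁ x = g₂ x := by
  refine sub_eq_zero.1 (radial_eq_zero (I := I) (g := fun x => g₁ x - g₂ x)
    (hg₁.sub hg₂) (hi₁.sub hi₂) (fun w => ?_) hx)
  obtain ⟨a₁, b₁⟩ := integral_radial_mul_ringGauss hI hg₁ hi₁ w
  obtain ⟨a₂, b₂⟩ := integral_radial_mul_ringGauss hI hg₂ hi₂ w
  simp only [sub_mul]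
  rw [integral_sub a₁ a₂, b₁, b₂, h _ (by positivity), sub_self]

lemma K_symm (I x y : ℝ) : K I x y = K I y x := by
  simp only [K, mul_comm y x, add_comm y x]

theorem stmt_14 (I : ℝ) (hI : 0 ≤ I) :
    (∀ g : ℝ → ℝ, ContinuousOn g (Set.Ici 0) → IntegrableOn g (Set.Ici 0) →
      (∀ y : ℝ, 0 ≤ y → (∫ x in Set.Ioi (0:ℝ), K I x y * g x) = 0) →
      ∀ x : ℝ, 0 ≤ x → g x = 0) ∧
    (∀ g₁ g₂ : ℝ → ℝ, ContinuousOn g₁ (Set.Ici 0) → IntegrableOn g₁ (Set.Ici 0) →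
      ContinuousOn g₂ (Set.Ici 0) → IntegrableOn g₂ (Set.Ici 0) →
      (∀ x : ℝ, 0 ≤ x →
        (∫ y in Set.Ioi (0:ℝ), K I x y * g₁ y) = ∫ y in Set.Ioi (0:ℝ), K I x y * g₂ y) →
      ∀ y : ℝ, 0 ≤ y → g₁ y = g₂ y) := by
  refine ⟨fun g hg hi h x hx => ?_, fun g₁ g₂ hg₁ hi₁ hg₂ hi₂ h y hy => ?_⟩
  · exact transform_injective (g₂ := fun _ => 0) hI hg hi continuousOn_const integrableOn_zero
      (fun y hy => by simpa using h y hy) hx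
  · refine transform_injective hI hg₁ hi₁ hg₂ hi₂ (fun x hx => ?_) hy
    simpa only [K_symm I x] using h x hx
end
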